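/- Let q_1, q_2 > 0 and P > 0. For all P_1, P_2 > 0 with P_1 + P_2 = 2P, the harmonic-mean end-to-end SNR satisfies (q_1² P_1 · q_2² P_2)/(q_1² P_1 + q_2² P_2) ≤ 2P · q_1² q_2² / (q_1 + q_2)², and equality holds if and only if P_1 = 2P q_2/(q_1 + q_2) and P_2 = 2P q_1/(q_1 + q_2). -/

import Mathlib

/-!
Write `a ∥ b = ab / (a + b)`. Both claims follow from one identity for the gap,
`(x + y) (a ∥ b)² - (a²x ∥ b²y) = (a ∥ b)² (ax - by)² / (a²x + b²y)`:
its right side is nonnegative, and it vanishes exactly when `ax = by`, which together with the value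
of `x + y` determines `x` and `y`.
-/

/-- The parallel sum `(a⁻¹ + b⁻¹)⁻¹` of `a` and `b`, i.e. half their harmonic mean. It is written
as a quotient, so it is `0` when `a + b = 0`. For `a = q₁²P₁` and `b = q₂²P₂` it is the end-to-end
SNR (with unit noise variance) of the relay. -/
def parallelSum {K : Type*} [Field K] (a b : K) : K :=
  a * b / (a + b)

section Field

variable {K : Type*} [Field K] {a b x y : K}

theorem parallelSum_ne_zero (ha : a ≠ 0) (hb : b ≠ 0) (hab : a + b ≠ 0) :
    parallelSum a b ≠ 0 :=
  div_ne_zero (mul_ne_zero ha hb) hab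

theorem add_mul_parallelSum_sq_sub (hab : a + b ≠ 0) (hxy : a ^ 2 * x + b ^ 2 * y ≠ 0) :
    (x + y) * parallelSum a b ^ 2 - parallelSum (a ^ 2 * x) (b ^ 2 * y) =
      parallelSum a b ^ 2 * (a * x - b * y) ^ 2 / (a ^ 2 * x + b ^ 2 * y) := by
  unfold parallelSum
  rw [eq_div_iff hxy, sub_mul, div_mul_cancel₀ _ hxy]
  field_simp
  ring

theorem parallelSum_sq_mul_eq_iff (ha : a ≠ 0) (hb : b ≠ 0) (hab : a + b ≠ 0)
    (hxy : a ^ 2 * x + b ^ 2 * y ≠ 0) :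
    parallelSum (a ^ 2 * x) (b ^ 2 * y) = (x + y) * parallelSum a b ^ 2 ↔ a * x = b * y := by
  have hne : parallelSum a b ^ 2 ≠ 0 := pow_ne_zero 2 (parallelSum_ne_zero ha hb hab)
  rw [eq_comm, ← sub_eq_zero, add_mul_parallelSum_sq_sub hab hxy, div_eq_zero_iff,
    or_iff_left hxy, mul_eq_zero_iff_left hne, sq_eq_zero_iff, sub_eq_zero]

theorem mul_eq_mul_iff_eq_add_mul_div (hab : a + b ≠ 0) :
    a * x = b * y ↔ x = (x + y) * b / (a + b) ∧ y = (x + y) * a / (a + b) := by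
  rw [eq_div_iff hab, eq_div_iff hab]
  exact ⟨fun h ↦ ⟨by linear_combination h, by linear_combination -h⟩,
    fun ⟨hx, _⟩ ↦ by linear_combination hx⟩

end Field

section LinearOrderedField

variable {K : Type*} [Field K] [LinearOrder K] [IsStrictOrderedRing K]

theorem parallelSum_sq_mul_le {a b x y : K} (hab : a + b ≠ 0) (hxy : 0 < a ^ 2 * x + b ^ 2 * y) :
    parallelSum (a ^ 2 * x) (b ^ 2 * y) ≤ (x + y) * parallelSum a b ^ 2 := by
  rw [← sub_nonneg, add_mul_parallelSum_sq_sub hab hxy.ne']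
  positivity

theorem stmt_6_general {q₁ q₂ P P₁ P₂ : K} (hq₁ : q₁ ≠ 0) (hq₂ : q₂ ≠ 0) (hq : q₁ + q₂ ≠ 0)
    (hSNR : 0 < q₁ ^ 2 * P₁ + q₂ ^ 2 * P₂) (hP : P₁ + P₂ = 2 * P) :
    (q₁ ^ 2 * P₁ * (q₂ ^ 2 * P₂)) / (q₁ ^ 2 * P₁ + q₂ ^ 2 * P₂) ≤
        2 * P * (q₁ ^ 2 * q₂ ^ 2) / (q₁ + q₂) ^ 2 ∧
      ((q₁ ^ 2 * P₁ * (q₂ ^ 2 * P₂)) / (q₁ ^ 2 * P₁ + q₂ ^ 2 * P₂) =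
          2 * P * (q₁ ^ 2 * q₂ ^ 2) / (q₁ + q₂) ^ 2 ↔
        P₁ = 2 * P * q₂ / (q₁ + q₂) ∧ P₂ = 2 * P * q₁ / (q₁ + q₂)) := by
  have hmax : 2 * P * (q₁ ^ 2 * q₂ ^ 2) / (q₁ + q₂) ^ 2 =
      (P₁ + P₂) * parallelSum q₁ q₂ ^ 2 := by
    rw [parallelSum, div_pow, mul_pow, mul_div_assoc, hP]
  rw [hmax, ← hP]
  exact ⟨parallelSum_sq_mul_le hq hSNR,
    (parallelSum_sq_mul_eq_iff hq₁ hq₂ hq hSNR.ne').trans (mul_eq_mul_iff_eq_add_mul_div hq)⟩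

end LinearOrderedField

/-- For `q₁, q₂, P > 0` and any `P₁, P₂ > 0` with `P₁ + P₂ = 2P`, the
harmonic-mean end-to-end SNR satisfies
`(q₁²P₁·q₂²P₂)/(q₁²P₁+q₂²P₂) ≤ 2P·q₁²q₂²/(q₁+q₂)²`, with equality iff
`P₁ = 2Pq₂/(q₁+q₂)` and `P₂ = 2Pq₁/(q₁+q₂)`. -/
theorem stmt_6 (q₁ q₂ P : ℝ) (hq1 : 0 < q₁) (hq2 : 0 < q₂) (hP : 0 < P) :
    ∀ P₁ P₂ : ℝ, 0 < P₁ → 0 < P₂ → P₁ + P₂ = 2 * P →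
      (q₁ ^ 2 * P₁ * (q₂ ^ 2 * P₂)) / (q₁ ^ 2 * P₁ + q₂ ^ 2 * P₂) ≤
          2 * P * (q₁ ^ 2 * q₂ ^ 2) / (q₁ + q₂) ^ 2 ∧
        ((q₁ ^ 2 * P₁ * (q₂ ^ 2 * P₂)) / (q₁ ^ 2 * P₁ + q₂ ^ 2 * P₂) =
            2 * P * (q₁ ^ 2 * q₂ ^ 2) / (q₁ + q₂) ^ 2 ↔
          P₁ = 2 * P * q₂ / (q₁ + q₂) ∧ P₂ = 2 * P * q₁ / (q₁ + q₂)) := by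
  intro P₁ P₂ hP₁ hP₂ h
  exact stmt_6_general hq1.ne' hq2.ne' (by positivity) (by positivity) h
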